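/- Let w = l_1 ⋯ l_n be a word in the letters u_1^{±1}, ..., u_N^{±1} whose cyclic reduction has length k ≥ 1, and let π be the unique w-admissible non-crossing half-pairing on [n]. Then a cyclic permutation l_i l_{i+1} ⋯ l_n l_1 ⋯ l_{i-1} of w has good reduction if and only if {i} is a through string (singleton block) of π. In particular, if w itself has good reduction then {1} is a through string of π. -/

import Mathlib

/-!
A word is read as a walk in the Cayley tree of the free group, and a through string `a` is used as
the starting point.  Since no pair surrounds a through string, the pairing read from `a` is a
well-nested system of parentheses among unpaired letters (`LinearPairing`, `linearPairing`), and the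
word can be processed with a stack: a left end or a through string is pushed, a right end pops its
partner.  The top of the stack always covers the next letter to be pushed, so by admissibility the
stack spells a reduced word, namely the linear reduction of the prefix read so far
(`LinearPairing.stack_spec`).

*Through strings give good reduction* (`LinearPairing.good`).  The letter at `a` never leaves the
stack, so no nonempty prefix is trivial.  At the end the top of the stack covers `a` cyclically, so
the linear reduction is cyclically reduced.

*Paired positions do not* (`LinearPairing.not_good`).  If `j` is the left end of a pair `(j, s)`,
the letters from `j` to `s` form a trivial prefix.  If `j` is the right end of `(s, j)`, write the
word read from `a` as `U ++ V` with `V` starting at `j`.  The stack shows that the reduction of `U`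
ends with the letter at `s`, the inverse of the first letter of `V`.  This is impossible when both
`U ++ V` and `V ++ U` have good reduction (`no_cancel_of_good`), because a walk that never returns
to its origin has a reduced form starting with its first letter (`head?_reduce`), and two cyclically
reduced conjugates linked in this way have the same length.
-/

namespace NCC

/-- A letter `u_i^{±1}`: a generator index together with a sign. -/
abbrev Letter (N : ℕ) := Fin N × Bool

/-- The inverse of a letter. -/
def linv {N : ℕ} (l : Letter N) : Letter N := (l.1, !l.2)

/-- One cyclic reduction step: either a linear reduction step (removal of two
adjacent letters which are inverses of each other), or removal of the first and
last letters when they are inverses of each other. -/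
def CyclicStep {N : ℕ} (w w' : List (Letter N)) : Prop :=
  FreeGroup.Red.Step w w' ∨
    ∃ (l : Letter N) (m : List (Letter N)), w = l :: (m ++ [linv l]) ∧ w' = m

/-- `w` reduces cyclically (in zero or more steps) to `v`. -/
def CycReducesTo {N : ℕ} (w v : List (Letter N)) : Prop :=
  Relation.ReflTransGen CyclicStep w v

/-- A word is linearly reduced when no two adjacent letters are inverses of
each other. -/
def LinReduced {N : ℕ} (w : List (Letter N)) : Prop :=
  List.Chain' (fun a b => b ≠ linv a) w

/-- A word is cyclically reduced iff `w ++ w` is linearly reduced, i.e. it is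
linearly reduced and its last letter is not the inverse of its first letter. -/
def CycReduced {N : ℕ} (w : List (Letter N)) : Prop :=
  LinReduced (w ++ w)

/-- A word is reducible to 1 if it linearly reduces to the empty word. -/
def ReducibleToOne {N : ℕ} (w : List (Letter N)) : Prop :=
  FreeGroup.Red w []

/-- A word has good reduction: no nonempty prefix is reducible to 1, and its
linear reduction is cyclically reduced. -/
def GoodReduction {N : ℕ} (w : List (Letter N)) : Prop :=
  (∀ s, s <+: w → s ≠ [] → ¬ ReducibleToOne s) ∧
    CycReduced (FreeGroup.reduce w)

/-- The first `i` letters of the infinite word `w_∞ = w w w ⋯`. -/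
def infTake {N : ℕ} (w : List (Letter N)) (i : ℕ) : List (Letter N) :=
  ((List.replicate i w).flatten).take i

open scoped Classical

/-- `i` and `j` lie in a common block of the partition `P`. -/
def Rel {n : ℕ} (P : Finpartition (Finset.univ : Finset (Fin n))) (i j : Fin n) : Prop :=
  ∃ B ∈ P.parts, i ∈ B ∧ j ∈ B

/-- `i` lies in a singleton block of `P`. -/
def IsSingleton {n : ℕ} (P : Finpartition (Finset.univ : Finset (Fin n))) (i : Fin n) : Prop :=
  ∃ B ∈ P.parts, i ∈ B ∧ B.card = 1

/-- The relation of the partition `π̃` obtained from `P` by merging all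
singleton blocks into a single block. -/
def RelTilde {n : ℕ} (P : Finpartition (Finset.univ : Finset (Fin n))) (i j : Fin n) : Prop :=
  Rel P i j ∨ (IsSingleton P i ∧ IsSingleton P j)

/-- An equivalence-like relation on `[n]` is non-crossing when there are no
`i₁ < i₂ < i₃ < i₄` with `i₁ ∼ i₃`, `i₂ ∼ i₄` but `i₁ ≁ i₂`. -/
def NonCrossingRel {n : ℕ} (r : Fin n → Fin n → Prop) : Prop :=
  ∀ i1 i2 i3 i4 : Fin n, i1 < i2 → i2 < i3 → i3 < i4 → r i1 i3 → r i2 i4 → r i1 i2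

/-- A non-crossing half-pairing on `[n]`: a non-crossing partition all of whose
blocks have at most two elements, with at least one singleton block (through
string), such that merging all singleton blocks still gives a non-crossing
partition. -/
structure HalfPairing (n : ℕ) where
  P : Finpartition (Finset.univ : Finset (Fin n))
  card_le : ∀ B ∈ P.parts, B.card ≤ 2
  exists_singleton : ∃ i, IsSingleton P i
  nc : NonCrossingRel (Rel P)
  nc_tilde : NonCrossingRel (RelTilde P)

/-- `r` and `s` form a pair (a two-element block) of `π`. -/
def Pairs {n : ℕ} (π : HalfPairing n) (r s : Fin n) : Prop :=
  r ≠ s ∧ Rel π.P r s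

/-- Membership in the cyclic interval `[i, j]` (going clockwise from `i` to
`j`, endpoints included). -/
def InCyc {n : ℕ} (i j x : Fin n) : Prop :=
  (x.val + n - i.val) % n ≤ (j.val + n - i.val) % n

/-- Cyclic successor of `i` in `[n]`. -/
def cnext {n : ℕ} (i : Fin n) : Fin n :=
  ⟨(i.val + 1) % n, Nat.mod_lt _ i.pos⟩

/-- Cyclic predecessor of `i` in `[n]`. -/
def cprev {n : ℕ} (i : Fin n) : Fin n :=
  ⟨(i.val + n - 1) % n, Nat.mod_lt _ i.pos⟩

/-- `a + j` modulo `n`. -/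
def cadd {n : ℕ} (a j : Fin n) : Fin n :=
  ⟨(a.val + j.val) % n, Nat.mod_lt _ a.pos⟩

/-- `x - a` modulo `n`. -/
def csub {n : ℕ} (x a : Fin n) : Fin n :=
  ⟨(x.val + n - a.val) % n, Nat.mod_lt _ a.pos⟩

/-- `i` has the outward orientation: it is a singleton, or it is the point of a
pair `(i, s)` such that the cyclic interval `[i, s]` contains no singleton. -/
def OutOriented {n : ℕ} (π : HalfPairing n) (i : Fin n) : Prop :=
  IsSingleton π.P i ∨
    ∃ s, Pairs π i s ∧ ∀ x, InCyc i s x → ¬ IsSingleton π.P x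

/-- `i` covers `j`: both are outward oriented, and either `j` is the cyclic
successor of `i`, or `π` pairs each point of the cyclic interval
`[i+1, j-1]` with another point of `[i+1, j-1]`. -/
def Covers {n : ℕ} (π : HalfPairing n) (i j : Fin n) : Prop :=
  OutOriented π i ∧ OutOriented π j ∧
    (j = cnext i ∨
      ∀ x, InCyc (cnext i) (cprev j) x →
        ∃ y, y ≠ x ∧ InCyc (cnext i) (cprev j) y ∧ Pairs π x y)

/-- The set of through strings (singleton blocks) of `π`. -/
noncomputable def throughFinset {n : ℕ} (π : HalfPairing n) : Finset (Fin n) :=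
  Finset.univ.filter (fun i => IsSingleton π.P i)

/-- The word formed by the letters of `w` at the through strings of `π`,
read in increasing order of position. -/
noncomputable def throughWord {n N : ℕ} (w : Fin n → Letter N) (π : HalfPairing n) :
    List (Letter N) :=
  ((throughFinset π).sort (· ≤ ·)).map w

/-- `π` is a `w`-pairing: paired positions carry mutually inverse letters, and
the through-string letters, read in order, form a cyclic reduction of `w`. -/
def IsWPairing {n N : ℕ} (w : Fin n → Letter N) (π : HalfPairing n) : Prop :=
  (∀ r s, Pairs π r s → w r = linv (w s)) ∧
    CycReducesTo (List.ofFn w) (throughWord w π) ∧ CycReduced (throughWord w π)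

/-- `π` is `w`-admissible: it is a `w`-pairing and `l_i ≠ l_j⁻¹` whenever
`i` covers `j`. -/
def Admissible {n N : ℕ} (w : Fin n → Letter N) (π : HalfPairing n) : Prop :=
  IsWPairing w π ∧ ∀ i j, Covers π i j → w i ≠ linv (w j)

/-! ### Reduced words in the free group -/

theorem ne_linv_iff {N : ℕ} (a b : Letter N) : b ≠ linv a ↔ (a.1 = b.1 → a.2 = b.2) := by
  obtain ⟨a1, a2⟩ := a
  obtain ⟨b1, b2⟩ := b
  simp only [linv, ne_eq, Prod.mk.injEq, not_and]
  cases a2 <;> cases b2 <;> simp [eq_comm]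

theorem linv_linv {N : ℕ} (a : Letter N) : linv (linv a) = a := by
  simp [linv]

theorem linReduced_iff {N : ℕ} (W : List (Letter N)) :
    LinReduced W ↔ FreeGroup.IsReduced W := by
  have h : (fun a b : Letter N => b ≠ linv a) = fun a b => a.1 = b.1 → a.2 = b.2 := by
    funext a b
    exact propext (ne_linv_iff a b)
  unfold LinReduced FreeGroup.IsReduced
  rw [← h]
  exact Iff.rfl

theorem isReduced_append_iff {N : ℕ} (U V : List (Letter N)) :
    FreeGroup.IsReduced (U ++ V) ↔ FreeGroup.IsReduced U ∧ FreeGroup.IsReduced V ∧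
      ∀ a ∈ U.getLast?, ∀ b ∈ V.head?, b ≠ linv a := by
  simp only [ne_linv_iff]
  exact List.isChain_append

theorem isReduced_reduce {N : ℕ} (W : List (Letter N)) :
    FreeGroup.IsReduced (FreeGroup.reduce W) :=
  FreeGroup.IsReduced.of_reduce_eq FreeGroup.reduce.idem

theorem reducibleToOne_iff {N : ℕ} (W : List (Letter N)) :
    ReducibleToOne W ↔ FreeGroup.reduce W = [] := by
  constructor
  · intro h
    simpa using FreeGroup.reduce.eq_of_red h
  · intro h
    have := FreeGroup.reduce.red (L := W)
    rwa [h] at this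

theorem mk_append_linv {N : ℕ} (a : Letter N) : FreeGroup.mk [a, linv a] = 1 := by
  have h : FreeGroup.Red.Step [a, linv a] [] := by
    simpa [linv] using FreeGroup.Red.Step.not (L₁ := []) (L₂ := []) (x := a.1) (b := a.2)
  exact Quot.sound h

/-- The walk traced by a word in the Cayley tree which never returns to its starting point stays
in the branch entered by its first step. -/
theorem head?_reduce {N : ℕ} (W : List (Letter N))
    (hW : ∀ s, s <+: W → s ≠ [] → ¬ ReducibleToOne s) :
    (FreeGroup.reduce W).head? = W.head? := by
  induction W using List.reverseRecOn with
  | nil => simp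
  | append_singleton W x ih =>
    specialize ih fun s hs => hW s (hs.trans (List.prefix_append _ _))
    rcases eq_or_ne W [] with rfl | hne
    · simp
    have hhead : (W ++ [x]).head? = W.head? := by
      cases W <;> simp_all
    rw [hhead, ← ih]
    have hR : FreeGroup.reduce W ≠ [] := fun h =>
      hW W (List.prefix_append _ _) hne ((reducibleToOne_iff W).2 h)
    have hmk : FreeGroup.reduce (W ++ [x]) = FreeGroup.reduce (FreeGroup.reduce W ++ [x]) := by
      rw [← FreeGroup.reduce_append_reduce_reduce (L₁ := W), FreeGroup.reduce_singleton]
    have hnil : FreeGroup.reduce (W ++ [x]) ≠ [] := fun h =>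
      hW _ List.prefix_rfl (by simp) ((reducibleToOne_iff _).2 h)
    rw [hmk] at hnil ⊢
    have hred := isReduced_reduce W
    generalize FreeGroup.reduce W = R at *
    induction R using List.reverseRecOn with
    | nil => exact absurd rfl hR
    | append_singleton R y _ =>
      by_cases hxy : x = linv y
      · subst hxy
        have hRred : FreeGroup.IsReduced R := ((isReduced_append_iff _ _).1 hred).1
        have : FreeGroup.reduce (R ++ [y] ++ [linv y]) = R := by
          rw [← hRred.reduce_eq]
          apply FreeGroup.reduce.sound
          rw [List.append_assoc, ← FreeGroup.mul_mk]
          simp only [List.singleton_append, mk_append_linv, mul_one, hRred.reduce_eq]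
        rw [this] at hnil ⊢
        cases R <;> simp_all
      · have : FreeGroup.IsReduced (R ++ [y] ++ [x]) := by
          rw [isReduced_append_iff]
          refine ⟨hred, FreeGroup.IsReduced.singleton, ?_⟩
          simpa using hxy
        rw [this.reduce_eq]
        cases R <;> simp

theorem CycReduced.last_head {N : ℕ} {c : List (Letter N)} (hc : CycReduced c) :
    ∀ a ∈ c.getLast?, ∀ b ∈ c.head?, b ≠ linv a :=
  ((isReduced_append_iff _ _).1 ((linReduced_iff _).1 hc)).2.2

/-- If `V ++ U` has good reduction `c`, then no cancellation takes place between `c` and the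
reduction of `V`, since both start with the first letter of `V`. -/
theorem isReduced_append_of_good {N : ℕ} {U V : List (Letter N)} (hV : V ≠ [])
    (h : GoodReduction (V ++ U)) :
    FreeGroup.IsReduced (FreeGroup.reduce (V ++ U) ++ FreeGroup.reduce V) := by
  rw [isReduced_append_iff]
  refine ⟨isReduced_reduce _, isReduced_reduce _, ?_⟩
  have h1 := head?_reduce _ h.1
  have h2 := head?_reduce V fun s hs => h.1 s (hs.trans (List.prefix_append _ _))
  have h3 : (V ++ U).head? = V.head? := by cases V <;> simp_all
  rw [h2, ← h3, ← h1]
  exact h.2.last_head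

theorem reduce_conj {N : ℕ} (U V : List (Letter N)) :
    FreeGroup.reduce (FreeGroup.reduce (V ++ U) ++ FreeGroup.reduce V) =
      FreeGroup.reduce (FreeGroup.reduce V ++ FreeGroup.reduce (U ++ V)) := by
  rw [FreeGroup.reduce_append_reduce_reduce, FreeGroup.reduce_append_reduce_reduce,
    List.append_assoc]

theorem length_le_of_good {N : ℕ} {U V : List (Letter N)} (hV : V ≠ [])
    (h : GoodReduction (V ++ U)) :
    (FreeGroup.reduce (V ++ U)).length ≤ (FreeGroup.reduce (U ++ V)).length := by
  have h1 := (isReduced_append_of_good hV h).reduce_eq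
  rw [reduce_conj] at h1
  have h2 := (FreeGroup.reduce.red
    (L := FreeGroup.reduce V ++ FreeGroup.reduce (U ++ V))).length_le
  rw [h1] at h2
  simp only [List.length_append] at h2
  omega

/-- When two rotations `U ++ V` and `V ++ U` of a word both have good reduction, the reduction of
`U` does not end with the inverse of the first letter of `V`.  With `c = reduce (U ++ V)`,
`c' = reduce (V ++ U)` and `g = reduce U`, the words `c ++ g` and `g ++ c'` represent the same
element, the first is reduced, and `c`, `c'` have equal lengths, so the second is reduced too. -/
theorem no_cancel_of_good {N : ℕ} {U V : List (Letter N)} (hU : U ≠ []) (hV : V ≠ [])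
    (h1 : GoodReduction (U ++ V)) (h2 : GoodReduction (V ++ U)) :
    ∀ a ∈ (FreeGroup.reduce U).getLast?, ∀ b ∈ V.head?, b ≠ linv a := by
  have hlen := le_antisymm (length_le_of_good hU h1) (length_le_of_good hV h2)
  have e1 := (isReduced_append_of_good hU h1).reduce_eq
  rw [reduce_conj] at e1
  have hred := FreeGroup.reduce.red
    (L := FreeGroup.reduce U ++ FreeGroup.reduce (V ++ U))
  rw [e1] at hred
  have heq := hred.sublist.eq_of_length (by simp only [List.length_append]; omega)
  have hr := isReduced_append_of_good hU h1
  rw [heq, isReduced_append_iff, head?_reduce _ h2.1] at hr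
  have h3 : (V ++ U).head? = V.head? := by cases V <;> simp_all
  rw [h3] at hr
  exact hr.2.2

/-! ### Pairings of an initial segment of `ℕ` -/

/-- A word `L 0, …, L (n-1)` with a non-crossing pairing `q` of some of its positions, read from an
unpaired position `0`, such that no pair surrounds an unpaired position. The field `cover` is the
admissibility condition; `L n` stands for `L 0`, so that `t = n` is the wrap-around case. -/
structure LinearPairing {N : ℕ} (n : ℕ) (L : ℕ → Letter N) (q : ℕ → ℕ → Prop) : Prop where
  pos : 0 < n
  wrap : L n = L 0
  symm : ∀ x y, q x y → q y x
  unique : ∀ x y z, x < n → y < n → z < n → q x y → q x z → y = z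
  irrefl : ∀ x, ¬ q x x
  nc : ∀ x y z u, x < y → y < z → z < u → u < n → q x z → ¬ q y u
  inside : ∀ x y z, x < y → y < z → z < n → q x z → ∃ u < n, q y u
  zero : ∀ y, ¬ q 0 y
  inv : ∀ x y, q x y → L x = linv (L y)
  cover : ∀ z t, z < t → t ≤ n → (∀ y < t, ¬ q z y) → (t = n ∨ ∀ y < t, ¬ q t y) →
    (∀ x, z < x → x < t → ∃ y, z < y ∧ y < t ∧ q x y) → L z ≠ linv (L t)

/-- The positions before `t` whose partner, if any, is not before `t`: the stack of pending
positions after the first `t` letters have been read. -/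
noncomputable def stack (q : ℕ → ℕ → Prop) (t : ℕ) : List ℕ :=
  (List.range t).filter fun x => ∀ y < t, ¬ q x y

namespace LinearPairing

variable {N n : ℕ} {L : ℕ → Letter N} {q : ℕ → ℕ → Prop}

theorem mem_stack {t x : ℕ} : x ∈ stack q t ↔ x < t ∧ ∀ y < t, ¬ q x y := by
  simp [stack]

theorem range_split {r t : ℕ} (h : r < t) :
    List.range t = List.range r ++ r :: (List.range' (r + 1) (t - r - 1)) := by
  rw [List.range_eq_range', List.range_eq_range', ← List.range'_succ]
  have := List.range'_append (s := 0) (m := r) (n := t - r - 1 + 1) (step := 1)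
  simp only [one_mul, zero_add] at this
  rw [this]
  congr 1
  omega

theorem stack_push (H : LinearPairing n L q) {t : ℕ} (ht : ∀ y < t, ¬ q t y) :
    stack q (t + 1) = stack q t ++ [t] := by
  unfold stack
  rw [List.range_succ, List.filter_append]
  congr 1
  · apply List.filter_congr
    intro x hx
    have hx := List.mem_range.1 hx
    simp only [decide_eq_decide]
    constructor
    · intro h y hy
      exact h y (by omega)
    · intro h y hy hq
      rcases Nat.lt_succ_iff_lt_or_eq.1 hy with h' | rfl
      · exact h y h' hq
      · exact ht x hx (H.symm _ _ hq)
  · rw [List.filter_cons_of_pos, List.filter_nil]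
    simp only [decide_eq_true_eq]
    intro y hy hq
    rcases Nat.lt_succ_iff_lt_or_eq.1 hy with h' | rfl
    · exact ht y h' hq
    · exact H.irrefl _ hq

theorem stack_before_pop (H : LinearPairing n L q) {r t : ℕ} (hrt : r < t) (htn : t < n)
    (hq : q r t) : stack q t = stack q r ++ [r] := by
  unfold stack
  rw [range_split hrt, List.filter_append, List.filter_cons_of_pos]
  · congr 1
    · apply List.filter_congr
      intro x hx
      have hx := List.mem_range.1 hx
      simp only [decide_eq_decide]
      constructor
      · intro h y hy
        exact h y (by omega)
      · intro h y hy hxy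
        rcases lt_trichotomy y r with h' | rfl | h'
        · exact h y h' hxy
        · have := H.unique _ _ _ (by omega) (by omega) htn (H.symm _ _ hxy) hq
          omega
        · exact H.nc x r y t hx h' hy htn hxy hq
    · congr 1
      rw [List.filter_eq_nil_iff]
      intro x hx
      rw [List.mem_range'_1] at hx
      simp only [decide_eq_true_eq]
      intro h
      obtain ⟨u, hu, hxu⟩ := H.inside r x t (by omega) (by omega) htn hq
      rcases lt_trichotomy u t with h' | rfl | h'
      · exact h u h' hxu
      · have := H.unique _ _ _ htn (by omega) (by omega) (H.symm _ _ hxu) (H.symm _ _ hq)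
        omega
      · exact H.nc r x t u (by omega) (by omega) h' hu hq hxu
  · simp only [decide_eq_true_eq]
    intro y hy hry
    have := H.unique _ _ _ (by omega) (by omega) htn hry hq
    omega

theorem stack_pop (H : LinearPairing n L q) {r t : ℕ} (hrt : r < t) (htn : t < n)
    (hq : q r t) : stack q (t + 1) = stack q r := by
  have h1 := H.stack_before_pop hrt htn hq
  have h2 : stack q (t + 1) = (stack q t).filter fun x => ¬ q x t := by
    unfold stack
    rw [List.range_succ, List.filter_append, List.filter_filter]
    have : List.filter (fun x => decide (∀ y < t + 1, ¬ q x y)) [t] = [] := by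
      rw [List.filter_cons_of_neg, List.filter_nil]
      simp only [decide_eq_true_eq]
      exact fun h => h r (by omega) (H.symm _ _ hq)
    rw [this, List.append_nil]
    apply List.filter_congr
    intro x _
    rw [← Bool.decide_and, decide_eq_decide]
    constructor
    · exact fun h => ⟨h t (by omega), fun y hy => h y (by omega)⟩
    · intro h y hy
      rcases Nat.lt_succ_iff_lt_or_eq.1 hy with h' | rfl
      · exact h.2 y h'
      · exact h.1
  rw [h2, h1, List.filter_append, List.filter_eq_self.2]
  · simp [hq]
  · intro x hx
    have hx := (mem_stack.1 hx).1
    simp only [decide_eq_true_eq]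
    intro hxt
    have := H.unique _ _ _ htn (by omega) (by omega) (H.symm _ _ hxt) (H.symm _ _ hq)
    omega

theorem lt_getLast {t z : ℕ} (hz : z ∈ (stack q t).getLast?) {x : ℕ} (hzx : z < x) :
    x ∉ stack q t := by
  intro hx
  have hs : (stack q t).Pairwise (· < ·) := List.pairwise_lt_range.filter _
  obtain ⟨S, hS⟩ := List.getLast?_eq_some_iff.1 hz
  rw [hS] at hs hx
  rw [List.pairwise_append] at hs
  rcases List.mem_append.1 hx with h | h
  · have := hs.2.2 x h z (by simp)
    omega
  · have := List.mem_singleton.1 h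
    omega

/-- The top of the stack covers the next position when the latter is pushed, or the bottom of the
stack when the whole word has been read, so the two letters do not cancel. -/
theorem top_ne (H : LinearPairing n L q) {t z : ℕ} (htn : t ≤ n)
    (ht : t = n ∨ ∀ y < t, ¬ q t y) (hz : z ∈ (stack q t).getLast?) : L z ≠ linv (L t) := by
  have hzm := mem_stack.1 (List.mem_of_getLast? hz)
  refine H.cover z t hzm.1 htn hzm.2 ht fun x hzx hxt => ?_
  have hx := lt_getLast hz hzx
  rw [mem_stack] at hx
  push Not at hx
  obtain ⟨y, hy, hxy⟩ := hx hxt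
  refine ⟨y, ?_, hy, hxy⟩
  by_contra hyz
  rcases Nat.lt_or_eq_of_le (Nat.le_of_not_lt hyz) with h | rfl
  · obtain ⟨u, hu, hzu⟩ := H.inside y z x h hzx (by omega) (H.symm _ _ hxy)
    have : t ≤ u := by
      by_contra h'
      exact hzm.2 u (by omega) hzu
    exact H.nc y z x u h hzx (by omega) hu (H.symm _ _ hxy) hzu
  · exact hzm.2 x hxt (H.symm _ _ hxy)

theorem stack_spec (H : LinearPairing n L q) (t : ℕ) (htn : t ≤ n) :
    FreeGroup.IsReduced ((stack q t).map L) ∧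
      FreeGroup.mk ((List.range t).map L) = FreeGroup.mk ((stack q t).map L) := by
  induction t using Nat.strong_induction_on with
  | _ t ih =>
  rcases t with _ | t
  · simp [stack, FreeGroup.IsReduced]
  obtain ⟨ihr, ihm⟩ := ih t (by omega) (by omega)
  rw [List.range_succ, List.map_append, ← FreeGroup.mul_mk, ihm]
  by_cases ht : ∀ y < t, ¬ q t y
  · rw [H.stack_push ht, List.map_append, FreeGroup.mul_mk, isReduced_append_iff]
    refine ⟨⟨ihr, FreeGroup.IsReduced.singleton, ?_⟩, rfl⟩
    intro a ha b hb
    rw [List.getLast?_map] at ha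
    obtain ⟨z, hz, rfl⟩ := Option.mem_map.1 ha
    obtain rfl : L t = b := by simpa using hb
    intro h
    exact H.top_ne (by omega) (Or.inr ht) hz (by rw [h, linv_linv])
  · push Not at ht
    obtain ⟨r, hrt, hq⟩ := ht
    have hq := H.symm _ _ hq
    rw [H.stack_pop hrt (by omega) hq, H.stack_before_pop hrt (by omega) hq]
    refine ⟨(ih r (by omega) (by omega)).1, ?_⟩
    rw [FreeGroup.mul_mk, List.map_append, List.append_assoc, ← FreeGroup.mul_mk]
    have : L t = linv (L r) := H.inv _ _ (H.symm _ _ hq)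
    simp [this, mk_append_linv]

theorem reduce_prefix (H : LinearPairing n L q) {t : ℕ} (htn : t ≤ n) :
    FreeGroup.reduce ((List.range t).map L) = (stack q t).map L := by
  rw [FreeGroup.reduce.sound (H.stack_spec t htn).2, (H.stack_spec t htn).1.reduce_eq]

theorem stack_eq_cons (H : LinearPairing n L q) {t : ℕ} (ht : 0 < t) :
    ∃ S, stack q t = 0 :: S := by
  unfold stack
  rw [range_split ht, List.range_zero, List.nil_append, List.filter_cons_of_pos]
  · exact ⟨_, rfl⟩
  · simpa using fun y _ => H.zero y

/-- A word read from a through string has good reduction: the stack never loses its bottom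
element, and at the end its top covers its bottom cyclically. -/
theorem good (H : LinearPairing n L q) : GoodReduction ((List.range n).map L) := by
  constructor
  · intro s hs hne h
    rw [reducibleToOne_iff] at h
    have hlen := hs.length_le
    rw [List.length_map, List.length_range] at hlen
    have hs' : s = (List.range s.length).map L := by
      conv_lhs => rw [List.prefix_iff_eq_take.1 hs, ← List.map_take, List.take_range,
        min_eq_left hlen]
    rw [hs', H.reduce_prefix hlen] at h
    obtain ⟨S, hS⟩ := H.stack_eq_cons (List.length_pos_iff.2 hne)
    simp [hS] at h
  · unfold CycReduced
    rw [linReduced_iff, H.reduce_prefix le_rfl, isReduced_append_iff]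
    refine ⟨(H.stack_spec n le_rfl).1, (H.stack_spec n le_rfl).1, ?_⟩
    intro a ha b hb h
    rw [List.getLast?_map] at ha
    obtain ⟨z, hz, rfl⟩ := Option.mem_map.1 ha
    obtain ⟨S, hS⟩ := H.stack_eq_cons H.pos
    obtain rfl : L 0 = b := by simpa [hS] using hb
    exact H.top_ne le_rfl (Or.inl rfl) hz (by rw [H.wrap, h, linv_linv])

/-- Starting at a paired position `j` destroys good reduction: if `j` is the left end of a pair
`(j, s)`, the letters from `j` to `s` form a trivial prefix; if it is the right end of `(s, j)`,
then the part read before `j` reduces to a word ending in `L s`, which cancels `L j`. -/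
theorem not_good (H : LinearPairing n L q) {j s : ℕ} (hj : j < n) (hs : s < n) (hq : q j s) :
    ¬ GoodReduction ((List.range' j (n - j)).map L ++ (List.range j).map L) := by
  intro hg
  have hUV : ∀ t, j ≤ t → (List.range j).map L ++ (List.range' j (t - j)).map L =
      (List.range t).map L := by
    intro t hjt
    rw [← List.map_append, List.range_eq_range', List.range_eq_range']
    have := List.range'_append (s := 0) (m := j) (n := t - j) (step := 1)
    simp only [one_mul, zero_add] at this
    rw [this]
    congr 2
    omega
  rcases lt_trichotomy j s with h | rfl | h
  · refine hg.1 ((List.range' j (s + 1 - j)).map L) ?_ ?_ ?_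
    · refine List.IsPrefix.trans ?_ (List.prefix_append _ _)
      apply List.IsPrefix.map
      have := List.range'_append (s := j) (m := s + 1 - j) (n := n - (s + 1)) (step := 1)
      have e : s + 1 - j + (n - (s + 1)) = n - j := by omega
      rw [e] at this
      rw [← this]
      exact List.prefix_append _ _
    · simp only [ne_eq, List.map_eq_nil_iff, List.range'_eq_nil_iff]
      omega
    · rw [reducibleToOne_iff]
      have e := congrArg FreeGroup.mk (hUV (s + 1) (by omega))
      rw [← FreeGroup.mul_mk, (H.stack_spec (s + 1) (by omega)).2, H.stack_pop h hs hq,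
        ← (H.stack_spec j (by omega)).2, mul_eq_left] at e
      rw [← FreeGroup.toWord_mk, e, FreeGroup.toWord_one]
  · exact H.irrefl _ hq
  · have hq' := H.symm _ _ hq
    have hgood := H.good
    rw [← hUV n hj.le] at hgood
    have key := no_cancel_of_good (by simp; omega) (by simp; omega) hgood hg
    rw [H.reduce_prefix hj.le, H.stack_before_pop h hj hq'] at key
    refine key (L s) (by simp) (L j) ?_ (H.inv _ _ hq)
    obtain ⟨m, hm⟩ : ∃ m, n - j = m + 1 := ⟨n - j - 1, by omega⟩
    simp [hm, List.range'_succ]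

end LinearPairing

/-! ### Reading a half-pairing from a given position -/

/-- The position reached from `a` after `x` steps around the circle. -/
def rot {n : ℕ} (a : Fin n) (x : ℕ) : Fin n :=
  ⟨(a.val + x) % n, Nat.mod_lt _ a.pos⟩

theorem rot_val {n : ℕ} (a : Fin n) {x : ℕ} (hx : x < n) :
    (rot a x).val = if a.val + x < n then a.val + x else a.val + x - n := by
  have ha := a.isLt
  unfold rot
  split_ifs with h
  · exact Nat.mod_eq_of_lt h
  · simp only
    rw [Nat.mod_eq_sub_mod (by omega), Nat.mod_eq_of_lt (by omega)]

theorem rot_zero {n : ℕ} (a : Fin n) : rot a 0 = a := by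
  ext
  simp [rot, Nat.mod_eq_of_lt a.isLt]

theorem rot_self {n : ℕ} (a : Fin n) : rot a n = a := by
  ext
  simp [rot, Nat.mod_eq_of_lt a.isLt]

theorem rot_add_mod {n : ℕ} (a : Fin n) (j x : ℕ) : rot (rot a j) x = rot a (j + x) := by
  ext
  simp [rot, Nat.add_assoc]

theorem rot_inj {n : ℕ} (a : Fin n) {x y : ℕ} (hx : x < n) (hy : y < n)
    (h : rot a x = rot a y) : x = y := by
  have h := congrArg Fin.val h
  rw [rot_val a hx, rot_val a hy] at h
  have ha := a.isLt
  split_ifs at h <;> omega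

theorem exists_rot {n : ℕ} (a y : Fin n) : ∃ x < n, rot a x = y := by
  have ha := a.isLt
  have hy := y.isLt
  by_cases h : a.val ≤ y.val
  · refine ⟨y.val - a.val, by omega, Fin.ext ?_⟩
    rw [rot_val a (by omega)]
    split_ifs <;> omega
  · refine ⟨y.val + n - a.val, by omega, Fin.ext ?_⟩
    rw [rot_val a (by omega)]
    split_ifs <;> omega

theorem rot_diff {n : ℕ} (a : Fin n) {i x : ℕ} (hi : i < n) (hx : x < n) :
    ((rot a x).val + n - (rot a i).val) % n = if i ≤ x then x - i else x + n - i := by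
  have ha := a.isLt
  rw [rot_val a hx, rot_val a hi]
  have key : ∀ m d : ℕ, d < n → (m = d ∨ m = d + n) → m % n = d := by
    rintro m d hd (rfl | rfl)
    · exact Nat.mod_eq_of_lt hd
    · rw [Nat.add_mod_right, Nat.mod_eq_of_lt hd]
  apply key
  · split_ifs <;> omega
  · split_ifs <;> omega

theorem inCyc_rot {n : ℕ} (a : Fin n) {i j x : ℕ} (hij : i ≤ j) (hj : j < n) (hx : x < n) :
    InCyc (rot a i) (rot a j) (rot a x) ↔ i ≤ x ∧ x ≤ j := by
  unfold InCyc
  rw [rot_diff a (by omega) hx, rot_diff a (by omega) hj]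
  split_ifs <;> omega

theorem cnext_rot {n : ℕ} (a : Fin n) (x : ℕ) : cnext (rot a x) = rot a (x + 1) := by
  ext
  simp [cnext, rot, Nat.add_assoc]

theorem cprev_rot {n : ℕ} (a : Fin n) {x : ℕ} (hx : x < n) : cprev (rot a (x + 1)) = rot a x := by
  have ha := a.isLt
  ext
  rcases Nat.lt_or_eq_of_le (Nat.succ_le_of_lt hx) with h | h
  · rw [rot_val a hx]
    simp only [cprev]
    rw [rot_val a h]
    split_ifs
    · rw [show a.val + x.succ + n - 1 = a.val + x + n by omega, Nat.add_mod_right,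
        Nat.mod_eq_of_lt (by omega)]
    · omega
    · rw [show a.val + x.succ - n + n - 1 = a.val + x by omega, Nat.mod_eq_of_lt (by omega)]
    · rw [show a.val + x.succ - n + n - 1 = a.val + x - n + n by omega, Nat.add_mod_right,
        Nat.mod_eq_of_lt (by omega)]
  · rw [show x + 1 = n from h, rot_self]
    simp only [cprev, rot]
    congr 1
    omega

/-- Being non-crossing is invariant under rotation of the circle. -/
theorem NonCrossingRel.rot {n : ℕ} {r : Fin n → Fin n → Prop} (h : NonCrossingRel r)
    (hs : ∀ x y, r x y → r y x) (ht : ∀ x y z, r x y → r y z → r x z) (a : Fin n)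
    {x y z u : ℕ} (hxy : x < y) (hyz : y < z) (hzu : z < u) (hu : u < n)
    (hxz : r (rot a x) (rot a z)) (hyu : r (rot a y) (rot a u)) :
    r (rot a x) (rot a y) := by
  have ha := a.isLt
  have vx := rot_val a (x := x) (by omega)
  have vy := rot_val a (x := y) (by omega)
  have vz := rot_val a (x := z) (by omega)
  have vu := rot_val a (x := u) (by omega)
  simp only [NonCrossingRel, Fin.lt_def] at h
  by_cases h1 : a.val + x < n
  · by_cases h2 : a.val + y < n
    · by_cases h3 : a.val + z < n
      · by_cases h4 : a.val + u < n
        · simp only [h1, h2, h3, h4, if_true, if_false] at vx vy vz vu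
          exact h _ _ _ _ (by omega) (by omega) (by omega) hxz hyu
        · simp only [h1, h2, h3, h4, if_true, if_false] at vx vy vz vu
          -- order on the line: `u, x, y, z`
          have := h _ _ _ _ (by omega) (by omega) (by omega) (hs _ _ hyu) hxz
          exact hs _ _ (ht _ _ _ hyu this)
      · have h4 : ¬ a.val + u < n := by omega
        simp only [h1, h2, h3, h4, if_true, if_false] at vx vy vz vu
        -- order on the line: `z, u, x, y`
        have := h _ _ _ _ (by omega) (by omega) (by omega) (hs _ _ hxz) (hs _ _ hyu)
        exact ht _ _ _ hxz (ht _ _ _ this (hs _ _ hyu))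
    · have h3 : ¬ a.val + z < n := by omega
      have h4 : ¬ a.val + u < n := by omega
      simp only [h1, h2, h3, h4, if_true, if_false] at vx vy vz vu
      -- order on the line: `y, z, u, x`
      have := h _ _ _ _ (by omega) (by omega) (by omega) hyu (hs _ _ hxz)
      exact ht _ _ _ hxz (hs _ _ this)
  · have h2 : ¬ a.val + y < n := by omega
    have h3 : ¬ a.val + z < n := by omega
    have h4 : ¬ a.val + u < n := by omega
    simp only [h1, h2, h3, h4, if_false] at vx vy vz vu
    exact h _ _ _ _ (by omega) (by omega) (by omega) hxz hyu

section HalfPairing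

variable {n : ℕ} (π : HalfPairing n)

theorem rel_symm {x y : Fin n} (h : Rel π.P x y) : Rel π.P y x := by
  obtain ⟨B, hB, hx, hy⟩ := h
  exact ⟨B, hB, hy, hx⟩

theorem rel_trans {x y z : Fin n} (h : Rel π.P x y) (h' : Rel π.P y z) : Rel π.P x z := by
  obtain ⟨B, hB, hx, hy⟩ := h
  obtain ⟨C, hC, hy', hz⟩ := h'
  obtain rfl := π.P.eq_of_mem_parts hB hC hy hy'
  exact ⟨B, hB, hx, hz⟩

theorem IsSingleton.eq_of_rel {x y : Fin n} (hx : IsSingleton π.P x) (h : Rel π.P x y) :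
    x = y := by
  obtain ⟨B, hB, hxB, hc⟩ := hx
  obtain ⟨C, hC, hxC, hyC⟩ := h
  obtain rfl := π.P.eq_of_mem_parts hB hC hxB hxC
  exact Finset.card_le_one.1 hc.le _ hxB _ hyC

theorem exists_pairs {x : Fin n} (hx : ¬ IsSingleton π.P x) : ∃ y, Pairs π x y := by
  obtain ⟨B, hB, hxB⟩ := π.P.exists_mem (Finset.mem_univ x)
  have hc : B.card ≠ 1 := fun hc => hx ⟨B, hB, hxB, hc⟩
  have hpos : 0 < B.card := Finset.card_pos.2 ⟨x, hxB⟩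
  obtain ⟨y, hy, hne⟩ := Finset.exists_mem_ne (by omega : 1 < B.card) x
  exact ⟨y, hne.symm, B, hB, hxB, hy⟩

theorem Pairs.unique {x y z : Fin n} (h : Pairs π x y) (h' : Pairs π x z) : y = z := by
  obtain ⟨hxy, B, hB, hx, hy⟩ := h
  obtain ⟨hxz, C, hC, hx', hz⟩ := h'
  obtain rfl := π.P.eq_of_mem_parts hB hC hx hx'
  by_contra hyz
  exact absurd (π.card_le B hB) (not_le.2 (Finset.two_lt_card.2 ⟨x, hx, y, hy, z, hz, hxy, hxz, hyz⟩))

theorem relTilde_symm {x y : Fin n} (h : RelTilde π.P x y) : RelTilde π.P y x :=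
  h.imp (rel_symm π) And.symm

theorem relTilde_trans {x y z : Fin n} (h : RelTilde π.P x y) (h' : RelTilde π.P y z) :
    RelTilde π.P x z := by
  rcases h with h | h <;> rcases h' with h' | h'
  · exact Or.inl (rel_trans π h h')
  · have := h'.1.eq_of_rel π (rel_symm π h)
    exact Or.inr ⟨this ▸ h'.1, h'.2⟩
  · have := h.2.eq_of_rel π h'
    exact Or.inr ⟨h.1, this ▸ h.2⟩
  · exact Or.inr ⟨h.1, h'.2⟩

/-- Reading an admissible half-pairing from a through string gives a linear pairing. -/
theorem linearPairing {N : ℕ} {w : Fin n → Letter N} (hπ : Admissible w π) {a : Fin n}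
    (ha : IsSingleton π.P a) :
    LinearPairing n (fun x => w (rot a x)) (fun x y => Pairs π (rot a x) (rot a y)) := by
  have hinside : ∀ x y z, x < y → y < z → z < n → Pairs π (rot a x) (rot a z) →
      ¬ IsSingleton π.P (rot a y) := by
    intro x y z hxy hyz hz hp hy
    have hx : ¬ IsSingleton π.P (rot a x) := fun h => hp.1 (h.eq_of_rel π hp.2)
    rcases Nat.eq_zero_or_pos x with rfl | hx0
    · rw [rot_zero] at hx
      exact hx ha
    have := π.nc_tilde.rot (fun _ _ => relTilde_symm π) (fun _ _ _ => relTilde_trans π) a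
      hx0 hxy hyz hz (Or.inr ⟨by rwa [rot_zero], hy⟩) (Or.inl hp.2)
    rcases this with h | h
    · rw [rot_zero] at h
      have := ha.eq_of_rel π h
      exact hx (this ▸ ha)
    · exact hx h.2
  have hout : ∀ x t, x < t → t ≤ n → (∀ y < t, ¬ Pairs π (rot a x) (rot a y)) →
      OutOriented π (rot a x) := by
    intro x t hxt htn h
    by_cases hs : IsSingleton π.P (rot a x)
    · exact Or.inl hs
    refine Or.inr ?_
    obtain ⟨s, hs'⟩ := exists_pairs π hs
    obtain ⟨s, hsn, rfl⟩ := exists_rot a s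
    have hts : t ≤ s := by
      by_contra hlt
      exact h s (by omega) hs'
    refine ⟨_, hs', fun y hy hys => ?_⟩
    obtain ⟨y, hyn, rfl⟩ := exists_rot a y
    rw [inCyc_rot a (by omega) hsn hyn] at hy
    rcases Nat.lt_or_eq_of_le hy.1 with h1 | rfl
    · rcases Nat.lt_or_eq_of_le hy.2 with h2 | rfl
      · exact hinside x y s h1 h2 hsn hs' hys
      · exact hs'.1 (hys.eq_of_rel π (rel_symm π hs'.2)).symm
    · exact hs hys
  exact {
    pos := a.pos
    wrap := by simp only [rot_zero, rot_self]
    symm := fun x y h => ⟨h.1.symm, rel_symm π h.2⟩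
    unique := fun x y z _ hy hz h h' => rot_inj a hy hz (h.unique π h')
    irrefl := fun x h => h.1 rfl
    nc := by
      intro x y z u hxy hyz hzu hu h h'
      have := π.nc.rot (fun _ _ => rel_symm π) (fun _ _ _ => rel_trans π) a hxy hyz hzu hu h.2 h'.2
      have hne : rot a x ≠ rot a y := fun e => by
        have := rot_inj a (by omega) (by omega) e
        omega
      have := rot_inj a (by omega) (by omega) (Pairs.unique π h ⟨hne, this⟩)
      omega
    inside := by
      intro x y z hxy hyz hz h
      obtain ⟨u, hu⟩ := exists_pairs π (hinside x y z hxy hyz hz h)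
      obtain ⟨u, hun, rfl⟩ := exists_rot a u
      exact ⟨u, hun, hu⟩
    zero := fun y h => h.1 (IsSingleton.eq_of_rel π (by rwa [rot_zero]) h.2)
    inv := fun x y h => hπ.1.1 _ _ h
    cover := by
      intro z t hzt htn hz ht hclosed
      refine hπ.2 _ _ ⟨hout z t hzt htn hz, ?_, ?_⟩
      · rcases eq_or_ne t n with rfl | hne
        · rw [rot_self]
          exact Or.inl ha
        · refine hout t (t + 1) (by omega) (by omega) fun y hy h => ?_
          rcases Nat.lt_succ_iff_lt_or_eq.1 hy with h' | rfl
          · exact (ht.resolve_left hne) y h' h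
          · exact h.1 rfl
      · rw [cnext_rot]
        obtain ⟨m, rfl⟩ : ∃ m, t = m + 1 := ⟨t - 1, by omega⟩
        rcases Nat.lt_or_eq_of_le (Nat.le_of_lt_succ hzt) with hzm | rfl
        · right
          rw [cprev_rot a (by omega)]
          intro x hx
          obtain ⟨x, hxn, rfl⟩ := exists_rot a x
          rw [inCyc_rot a (by omega) (by omega) hxn] at hx
          obtain ⟨y, hzy, hyt, hxy⟩ := hclosed x (by omega) (by omega)
          refine ⟨_, hxy.1.symm, ?_, hxy⟩
          rw [inCyc_rot a (by omega) (by omega) (by omega)]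
          omega
        · exact Or.inl rfl }

end HalfPairing

theorem ofFn_cadd {N n : ℕ} (w : Fin n → Letter N) (i : Fin n) :
    List.ofFn (fun j => w (cadd i j)) = (List.range n).map fun x => w (rot i x) := by
  apply List.ext_getElem
  · simp
  · intro m h1 h2
    simp [cadd, rot]

theorem ofFn_cadd_rot {N n : ℕ} (w : Fin n → Letter N) (a : Fin n) {j : ℕ} (hj : j < n) :
    List.ofFn (fun x => w (cadd (rot a j) x)) =
      (List.range' j (n - j)).map (fun x => w (rot a x)) ++
        (List.range j).map fun x => w (rot a x) := by
  rw [ofFn_cadd]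
  apply List.ext_getElem
  · simp
    omega
  · intro m h1 h2
    simp only [List.length_map, List.length_range] at h1
    rw [List.getElem_append]
    simp only [List.getElem_map, List.getElem_range, List.length_map, List.length_range',
      List.getElem_range', rot_add_mod]
    split_ifs with h
    · simp
    · congr 1
      ext
      simp only [rot]
      rw [show a.val + (j + m) = a.val + (m - (n - j)) + n by omega, Nat.add_mod_right]

/-- Let `w` be a word whose cyclic reduction has length `k ≥ 1` and let `π` be
the (unique) `w`-admissible half-pairing.  Then the cyclic permutation of `w`
starting at position `i` has good reduction iff `{i}` is a through string of
`π`.  (In particular, taking `i = 0`: if `w` itself has good reduction then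
the first position is a through string.) -/
theorem goodReduction_iff_throughString (N n k : ℕ) (hk : 1 ≤ k)
    (w : Fin n → Letter N) (v : List (Letter N))
    (hv : CycReducesTo (List.ofFn w) v) (hvc : CycReduced v) (hvk : v.length = k)
    (π : HalfPairing n) (hπ : Admissible w π) (i : Fin n) :
    GoodReduction (List.ofFn (fun j => w (cadd i j))) ↔ IsSingleton π.P i := by
  constructor
  · intro hg
    by_contra hi
    obtain ⟨a, ha⟩ := π.exists_singleton
    obtain ⟨s, hs⟩ := exists_pairs π hi
    obtain ⟨j, hj, rfl⟩ := exists_rot a i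
    obtain ⟨s, hsn, rfl⟩ := exists_rot a s
    rw [ofFn_cadd_rot w a hj] at hg
    exact (linearPairing π hπ ha).not_good hj hsn hs hg
  · intro hi
    rw [ofFn_cadd]
    exact (linearPairing π hπ hi).good

end NCC
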